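/- arXiv:1701.05575 — 4 statements merged into one kernel-verified Lean document; each statement's English description precedes it below -/
import Mathlib

section
/- Let h : ℝ → ℝ be continuous and proper (equivalently, |h(t)| → ∞ as |t| → ∞), and assume that no value of h is attained at three distinct points. Then one of the following four alternatives holds: (i) h is strictly increasing on ℝ; (ii) h is strictly decreasing on ℝ; (iii) there exists T ∈ ℝ such that h is strictly increasing on (−∞, T] and strictly decreasing on [T, ∞); (iv) there exists T ∈ ℝ such that h is strictly decreasing on (−∞, T] and strictly increasing on [T, ∞). -/
/-!
A proper function cannot attain both a maximum and a minimum; say it has no maximum. If `f b` were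
larger than `f a` and `f c` for some `a < b < c`, then a level slightly below `f b` would be crossed
between `a` and `b`, between `b` and `c`, and once more on the way to a point outside `[a, c]` where
`f` exceeds its maximum on `[a, c]`. So `f b ≤ max (f a) (f c)` whenever `a < b < c`, and the
inequality is strict because no value is attained three times. If such an `f` is injective, it is
strictly monotone by continuity. Otherwise `f x = f y` for some `x < y`, strictness makes `f` larger
than `f x` outside `[x, y]`, so `f` has a global minimum, on either side of which it is strictly
monotone. The case of a function without minimum follows by reversing the order of the codomain.
-/

open Set OrderDual

variable {α β : Type*}

/-- No value of `f` is attained at three distinct points. -/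
def AtMostTwoToOne (f : α → β) : Prop :=
  ¬ ∃ t₁ t₂ t₃ : α, t₁ ≠ t₂ ∧ t₂ ≠ t₃ ∧ t₁ ≠ t₃ ∧ f t₁ = f t₂ ∧ f t₂ = f t₃

/-- Strict quasiconvexity of a function between linear orders: at a point between two others, `f`
is smaller than the larger of its values there. Only the order of the domain is used, whereas
Mathlib's `QuasiconvexOn` needs a module. -/
def StrictQuasiconvex [LinearOrder α] [LinearOrder β] (f : α → β) : Prop :=
  ∀ ⦃a b c : α⦄, a < b → b < c → f b < max (f a) (f c)

namespace AtMostTwoToOne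

section Preorder

variable [Preorder α] {f : α → β}

theorem ne_of_lt_of_lt (hf : AtMostTwoToOne f) {a b c : α} (hab : a < b) (hbc : b < c)
    (heq : f a = f b) : f b ≠ f c :=
  fun heq' => hf ⟨a, b, c, hab.ne, hbc.ne, (hab.trans hbc).ne, heq, heq'⟩

theorem notMem_image_Ioo (hf : AtMostTwoToOne f) {a b c d : α} {v : β}
    (hab : v ∈ f '' Ioo a b) (hbc : v ∈ f '' Ioo b c) : v ∉ f '' Ioo c d := by
  rintro ⟨t, ht, htv⟩
  obtain ⟨r, hr, hrv⟩ := hab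
  obtain ⟨s, hs, hsv⟩ := hbc
  exact hf.ne_of_lt_of_lt (hr.2.trans hs.1) (hs.2.trans ht.1) (hrv.trans hsv.symm)
    (hsv.trans htv.symm)

end Preorder

section LinearOrder

variable [LinearOrder α] [LinearOrder β] [DenselyOrdered α] {f : α → β}

theorem strictQuasiconvex (hf : AtMostTwoToOne f)
    (hquasi : ∀ ⦃a b c : α⦄, a < b → b < c → f b ≤ max (f a) (f c)) : StrictQuasiconvex f := by
  intro a b c hab hbc
  have lt_of_between {x y z : α} (hxy : x < y) (hyz : y < z) (hxz : f x = f z) : f y < f x := by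
    refine lt_of_le_of_ne (by simpa [hxz] using hquasi hxy hyz) fun hyx => ?_
    exact hf.ne_of_lt_of_lt hxy hyz hyx.symm (hyx.trans hxz)
  by_contra! hmax
  obtain ⟨hfa, hfc⟩ := max_le_iff.1 hmax
  rcases le_max_iff.1 (hquasi hab hbc) with hle | hle
  · have hfab : f a = f b := hfa.antisymm hle
    obtain ⟨z, haz, hzb⟩ := exists_between hab
    have hz : f z < f b := hfab ▸ lt_of_between haz hzb hfab
    have hfbc : f b ≤ f c := (le_max_iff.1 (hquasi hzb hbc)).resolve_left hz.not_ge
    exact hf.ne_of_lt_of_lt hab hbc hfab (hfbc.antisymm hfc)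
  · have hfbc : f b = f c := hle.antisymm hfc
    obtain ⟨z, hbz, hzc⟩ := exists_between hbc
    have hz : f z < f b := lt_of_between hbz hzc hfbc
    have hfba : f b ≤ f a := (le_max_iff.1 (hquasi hab hbz)).resolve_right hz.not_ge
    exact hf.ne_of_lt_of_lt hab hbc (hfa.antisymm hfba) hfbc

end LinearOrder

end AtMostTwoToOne

namespace StrictQuasiconvex

section LinearOrder

variable [LinearOrder α] [LinearOrder β] {f : α → β}

theorem comp_ofDual (hf : StrictQuasiconvex f) : StrictQuasiconvex (f ∘ ofDual) :=
  fun _ _ _ hab hbc => (hf hbc hab).trans_eq (max_comm _ _)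

theorem strictMonoOn_Ici_of_forall_le [DenselyOrdered α] (hf : StrictQuasiconvex f) {T : α}
    (hT : ∀ t, f T ≤ f t) : StrictMonoOn f (Ici T) := by
  intro x hx y _ hxy
  rcases eq_or_lt_of_le (mem_Ici.1 hx) with rfl | hTx
  · refine lt_of_le_of_ne (hT y) fun heq => ?_
    obtain ⟨z, hTz, hzy⟩ := exists_between hxy
    have hz : f z < f T := by simpa [← heq] using hf hTz hzy
    exact hz.not_ge (hT z)
  · exact (lt_max_iff.1 (hf hTx hxy)).resolve_left (hT x).not_gt

theorem strictAntiOn_Iic_of_forall_le [DenselyOrdered α] (hf : StrictQuasiconvex f) {T : α}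
    (hT : ∀ t, f T ≤ f t) : StrictAntiOn f (Iic T) :=
  strictMonoOn_comp_ofDual_iff.1 (hf.comp_ofDual.strictMonoOn_Ici_of_forall_le hT)

theorem lt_of_notMem_Icc (hf : StrictQuasiconvex f) {x y t : α} (hxy : x < y) (heq : f x = f y)
    (ht : t ∉ Icc x y) : f x < f t := by
  rcases not_and_or.1 ht with htx | hyt
  · exact (lt_max_iff.1 (hf (not_le.1 htx) hxy)).resolve_right heq.not_lt
  · exact heq ▸ (lt_max_iff.1 (hf hxy (not_le.1 hyt))).resolve_left heq.not_gt

end LinearOrder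

variable [LinearOrder α] [TopologicalSpace α] [CompactIccSpace α]
  [LinearOrder β] [TopologicalSpace β] [ClosedIicTopology β] {f : α → β}

theorem exists_forall_le (hf : StrictQuasiconvex f) (hcont : Continuous f)
    (hinj : ¬ Function.Injective f) : ∃ T, ∀ t, f T ≤ f t := by
  obtain ⟨x, y, heq, hne⟩ := Function.not_injective_iff.1 hinj
  wlog hxy : x < y generalizing x y
  · exact this y x heq.symm hne.symm (hne.lt_or_gt.resolve_left hxy)
  obtain ⟨T, -, hT⟩ := isCompact_Icc.exists_isMinOn (nonempty_Icc.2 hxy.le) hcont.continuousOn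
  refine ⟨T, fun t => ?_⟩
  by_cases ht : t ∈ Icc x y
  · exact hT ht
  · exact (hT (left_mem_Icc.2 hxy.le)).trans (hf.lt_of_notMem_Icc hxy heq ht).le

end StrictQuasiconvex

section Continuous

variable [ConditionallyCompleteLinearOrder α] [DenselyOrdered α] [TopologicalSpace α]
  [OrderTopology α] [LinearOrder β] [TopologicalSpace β] [OrderClosedTopology β]
  {f : α → β}

theorem StrictQuasiconvex.strictMono_or_strictAnti_or_valley (hf : StrictQuasiconvex f)
    (hcont : Continuous f) :
    StrictMono f ∨ StrictAnti f ∨ ∃ T, StrictAntiOn f (Iic T) ∧ StrictMonoOn f (Ici T) := by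
  by_cases hinj : Function.Injective f
  · exact (hcont.strictMono_of_inj hinj).imp_right Or.inl
  · obtain ⟨T, hT⟩ := hf.exists_forall_le hcont hinj
    exact .inr <| .inr
      ⟨T, hf.strictAntiOn_Iic_of_forall_le hT, hf.strictMonoOn_Ici_of_forall_le hT⟩

variable [DenselyOrdered β]

theorem AtMostTwoToOne.le_max_of_forall_exists_lt (hf : AtMostTwoToOne f) (hcont : Continuous f)
    (hnomax : ∀ x, ∃ y, f x < f y) ⦃a b c : α⦄ (hab : a < b) (hbc : b < c) :
    f b ≤ max (f a) (f c) := by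
  by_contra! hpeak
  obtain ⟨v, hmax, hvb⟩ := exists_between hpeak
  obtain ⟨hav, hcv⟩ := max_lt_iff.1 hmax
  have ascent : v ∈ f '' Ioo a b := intermediate_value_Ioo hab.le hcont.continuousOn ⟨hav, hvb⟩
  have descent : v ∈ f '' Ioo b c := intermediate_value_Ioo' hbc.le hcont.continuousOn ⟨hcv, hvb⟩
  have hac : a ≤ c := (hab.trans hbc).le
  obtain ⟨m, -, hm⟩ := isCompact_Icc.exists_isMaxOn (nonempty_Icc.2 hac) hcont.continuousOn
  obtain ⟨d, hmd⟩ := hnomax m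
  have hvd : v < f d := hvb.trans ((hm ⟨hab.le, hbc.le⟩).trans_lt hmd)
  have hd : d ∉ Icc a c := fun hd => hmd.not_ge (hm hd)
  rcases not_and_or.1 hd with hda | hcd
  · exact hf.notMem_image_Ioo
      (intermediate_value_Ioo' (not_le.1 hda).le hcont.continuousOn ⟨hav, hvd⟩) ascent descent
  · exact hf.notMem_image_Ioo ascent descent
      (intermediate_value_Ioo (not_le.1 hcd).le hcont.continuousOn ⟨hcv, hvd⟩)

theorem AtMostTwoToOne.strictMono_or_strictAnti_or_valley (hf : AtMostTwoToOne f)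
    (hcont : Continuous f) (hnomax : ∀ x, ∃ y, f x < f y) :
    StrictMono f ∨ StrictAnti f ∨ ∃ T, StrictAntiOn f (Iic T) ∧ StrictMonoOn f (Ici T) :=
  (hf.strictQuasiconvex
    (hf.le_max_of_forall_exists_lt hcont hnomax)).strictMono_or_strictAnti_or_valley hcont

theorem AtMostTwoToOne.strictMono_or_strictAnti_or_peak (hf : AtMostTwoToOne f)
    (hcont : Continuous f) (hnomin : ∀ x, ∃ y, f y < f x) :
    StrictMono f ∨ StrictAnti f ∨ ∃ T, StrictMonoOn f (Iic T) ∧ StrictAntiOn f (Ici T) := by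
  have hdual : AtMostTwoToOne (toDual ∘ f) := hf
  have htypes := hdual.strictMono_or_strictAnti_or_valley (continuous_toDual.comp hcont) hnomin
  simp only [strictMono_toDual_comp_iff, strictAnti_toDual_comp_iff, strictMonoOn_toDual_comp_iff,
    strictAntiOn_toDual_comp_iff] at htypes
  exact or_left_comm.1 htypes

theorem stmt3_general (hcont : Continuous f)
    (hnoext : (∀ x, ∃ y, f x < f y) ∨ ∀ x, ∃ y, f y < f x) (hf : AtMostTwoToOne f) :
    StrictMono f ∨ StrictAnti f ∨
    (∃ T, StrictMonoOn f (Iic T) ∧ StrictAntiOn f (Ici T)) ∨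
    (∃ T, StrictAntiOn f (Iic T) ∧ StrictMonoOn f (Ici T)) := by
  rcases hnoext with hnomax | hnomin
  · exact (hf.strictMono_or_strictAnti_or_valley hcont hnomax).imp_right (.imp_right .inr)
  · exact (hf.strictMono_or_strictAnti_or_peak hcont hnomin).imp_right (.imp_right .inl)

end Continuous

theorem forall_exists_lt_or_of_tendsto_abs_atTop {X R : Type*} [AddCommGroup R] [LinearOrder R]
    [IsOrderedAddMonoid R] [NoMaxOrder R] {l : Filter X} [l.NeBot] {f : X → R}
    (hf : Filter.Tendsto (fun x => |f x|) l Filter.atTop) :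
    (∀ x, ∃ y, f x < f y) ∨ ∀ x, ∃ y, f y < f x := by
  by_contra! hext
  obtain ⟨⟨p, hp⟩, q, hq⟩ := hext
  refine Filter.not_bddAbove_of_tendsto_atTop hf ⟨max |f q| |f p|, ?_⟩
  rintro _ ⟨x, rfl⟩
  exact abs_le_max_abs_abs (hq x) (hp x)

/-- A continuous proper function `h : ℝ → ℝ` (`|h t| → ∞` as `|t| → ∞`), no value of which
is attained at three distinct points, is of one of four topological types: strictly
increasing, strictly decreasing, strictly unimodal with a maximum, or strictly unimodal
with a minimum. -/
theorem stmt3 (h : ℝ → ℝ) (hc : Continuous h)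
    (hproper : Filter.Tendsto (fun t => |h t|) (Filter.cocompact ℝ) Filter.atTop)
    (hno3 : ¬ ∃ t₁ t₂ t₃ : ℝ, t₁ ≠ t₂ ∧ t₂ ≠ t₃ ∧ t₁ ≠ t₃ ∧ h t₁ = h t₂ ∧ h t₂ = h t₃) :
    StrictMono h ∨ StrictAnti h ∨
    (∃ T : ℝ, StrictMonoOn h (Set.Iic T) ∧ StrictAntiOn h (Set.Ici T)) ∨
    (∃ T : ℝ, StrictAntiOn h (Set.Iic T) ∧ StrictMonoOn h (Set.Ici T)) :=
  stmt3_general hc (forall_exists_lt_or_of_tendsto_abs_atTop hproper) hno3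
end

section
/- Let E be a connected metric space and let g : E × ℝ → ℝ be continuous such that the map G : E × ℝ → E × ℝ defined by G(e,t) = (e, g(e,t)) is proper. Then there exist signs ε₊, ε₋ ∈ {+1, −1}, independent of e, such that for every e ∈ E: g(e,t) → +∞ as t → +∞ if ε₊ = +1 and g(e,t) → −∞ as t → +∞ if ε₊ = −1; and g(e,t) → +∞ as t → −∞ if ε₋ = +1 and g(e,t) → −∞ as t → −∞ if ε₋ = −1. -/
/-!
Properness makes `g` tend to infinity in absolute value as `|t| → ∞`, locally uniformly in `e`:
an ultrafilter on `E × ℝ` that converges in `E`, escapes in `ℝ` and keeps `g` bounded would be sent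
by `G` to a convergent one, hence would itself converge. So near a given `e₀` the function `g` omits
the value `0` on all the tails `{e} × [T, ∞)` for one common `T`. By the intermediate value theorem
the sign of `g` on such a tail is that of `g (e, T)`, which is locally constant in `e`;
connectedness of `E` then makes it constant.
-/

open Filter Set Topology

section Cocompact

theorem weaklyLocallyCompactSpace_of_compactIccSpace {X : Type*} [LinearOrder X]
    [TopologicalSpace X] [OrderClosedTopology X] [CompactIccSpace X] [NoMinOrder X]
    [NoMaxOrder X] : WeaklyLocallyCompactSpace X where
  exists_compact_mem_nhds x :=
    let ⟨a, hax⟩ := exists_lt x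
    let ⟨b, hxb⟩ := exists_gt x
    ⟨Icc a b, isCompact_Icc, Icc_mem_nhds hax hxb⟩

variable {E X Y : Type*} [TopologicalSpace E] [TopologicalSpace X] [TopologicalSpace Y]

theorem tendsto_nhds_prod_cocompact_of_isProperMap [WeaklyLocallyCompactSpace X] {g : E × X → Y}
    (hG : IsProperMap fun p : E × X ↦ (p.1, g p)) (e₀ : E) :
    Tendsto g (𝓝 e₀ ×ˢ cocompact X) (cocompact Y) := by
  refine (tendsto_iff_ultrafilter _ _ _).2 fun 𝒰 h𝒰 ↦ ?_
  have h𝒰_fst : Tendsto Prod.fst (𝒰 : Filter (E × X)) (𝓝 e₀) := tendsto_fst.mono_left h𝒰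
  have h𝒰_snd : Tendsto Prod.snd (𝒰 : Filter (E × X)) (cocompact X) := tendsto_snd.mono_left h𝒰
  refine hasBasis_cocompact.tendsto_right_iff.2 fun K hK ↦ ?_
  by_contra hmem
  have hgK : ∀ᶠ p in (𝒰 : Filter (E × X)), g p ∈ K := by
    simpa using Ultrafilter.eventually_not.2 hmem
  obtain ⟨y, -, hy⟩ := hK.ultrafilter_le_nhds (𝒰.map g) (le_principal_iff.2 hgK)
  obtain ⟨p, -, hp⟩ :=
    (isProperMap_iff_ultrafilter.1 hG).2 (h𝒰_fst.prodMk_nhds (show Tendsto g 𝒰 (𝓝 y) from hy))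
  have h𝒰_snd_nhds : Tendsto Prod.snd 𝒰 (𝓝 p.2) := continuous_snd.continuousAt.mono_left hp
  exact h𝒰_snd_nhds.not_tendsto (disjoint_nhds_cocompact p.2) h𝒰_snd

end Cocompact

section EventualSign

variable {X Y : Type*} {l : Filter X}

theorem tendsto_atTop_of_eventually_gt [Preorder Y] {f : X → Y} {c : Y}
    (hf : Tendsto f l (atBot ⊔ atTop)) (hc : ∀ᶠ x in l, c < f x) : Tendsto f l atTop := by
  have h : (atBot ⊔ atTop) ⊓ 𝓟 (Ioi c) ≤ atTop := by
    rw [inf_sup_right, (disjoint_atBot_principal_Ioi c).eq_bot, bot_sup_eq]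
    exact inf_le_left
  exact (tendsto_inf.2 ⟨hf, tendsto_principal.2 hc⟩).mono_right h

theorem tendsto_atBot_of_eventually_lt [Preorder Y] {f : X → Y} {c : Y}
    (hf : Tendsto f l (atBot ⊔ atTop)) (hc : ∀ᶠ x in l, f x < c) : Tendsto f l atBot :=
  tendsto_atTop_of_eventually_gt (Y := Yᵒᵈ) (sup_comm (atBot : Filter Y) atTop ▸ hf) hc

variable {E ι : Type*} [TopologicalSpace E] [TopologicalSpace X] [LinearOrder Y]
  [TopologicalSpace Y] [OrderClosedTopology Y] [NoMinOrder Y] [NoMaxOrder Y] [l.NeBot]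
  {p : ι → Prop} {s : ι → Set X} {g : E × X → Y}

theorem eventually_tendsto_atTop_or_eventually_tendsto_atBot (hl : l.HasBasis p s)
    (hs : ∀ i, p i → IsPreconnected (s i)) (hg : Continuous g)
    (hlim : ∀ e, Tendsto g (𝓝 e ×ˢ l) (atBot ⊔ atTop)) (e₀ : E) :
    (∀ᶠ e in 𝓝 e₀, Tendsto (fun x ↦ g (e, x)) l atTop) ∨
      ∀ᶠ e in 𝓝 e₀, Tendsto (fun x ↦ g (e, x)) l atBot := by
  have hfiber (e : E) : Tendsto (fun x ↦ g (e, x)) l (atBot ⊔ atTop) :=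
    (hlim e).comp (tendsto_const_nhds.prodMk tendsto_id)
  obtain ⟨c⟩ : Nonempty Y := l.nonempty_of_neBot.map fun x ↦ g (e₀, x)
  have hne : ∀ᶠ q in 𝓝 e₀ ×ˢ l, g q ≠ c :=
    (hlim e₀).eventually (eventually_sup.2 ⟨eventually_ne_atBot c, eventually_ne_atTop c⟩)
  obtain ⟨⟨V, i⟩, ⟨hV, hi⟩, hVi⟩ := ((basis_sets _).prod hl).eventually_iff.1 hne
  have hcont (e : E) : ContinuousOn (fun x ↦ g (e, x)) (s i) := by fun_prop
  have hne_tail (e : E) (he : e ∈ V) (x : X) (hx : x ∈ s i) : g (e, x) ≠ c :=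
    hVi ⟨he, hx⟩
  obtain ⟨x₀, hx₀⟩ := Filter.nonempty_of_mem (hl.mem_of_mem hi)
  have hcont_x₀ : ContinuousAt (fun e ↦ g (e, x₀)) e₀ := by fun_prop
  rcases (hne_tail e₀ (mem_of_mem_nhds hV) x₀ hx₀).lt_or_gt with hlt | hgt
  · right
    filter_upwards [hV, hcont_x₀.eventually_lt_const hlt] with e he hlt_e
    exact tendsto_atBot_of_eventually_lt (hfiber e) <| mem_of_superset (hl.mem_of_mem hi) fun x hx ↦
      (hs i hi).gt_of_ne (hcont e) (hne_tail e he) ⟨x₀, hx₀, hlt_e⟩ hx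
  · left
    filter_upwards [hV, hcont_x₀.eventually_const_lt hgt] with e he hgt_e
    exact tendsto_atTop_of_eventually_gt (hfiber e) <| mem_of_superset (hl.mem_of_mem hi) fun x hx ↦
      (hs i hi).lt_of_ne (hcont e) (hne_tail e he) ⟨x₀, hx₀, hgt_e⟩ hx

theorem forall_tendsto_atTop_or_forall_tendsto_atBot [PreconnectedSpace E] (hl : l.HasBasis p s)
    (hs : ∀ i, p i → IsPreconnected (s i)) (hg : Continuous g)
    (hlim : ∀ e, Tendsto g (𝓝 e ×ˢ l) (atBot ⊔ atTop)) :
    (∀ e, Tendsto (fun x ↦ g (e, x)) l atTop) ∨ ∀ e, Tendsto (fun x ↦ g (e, x)) l atBot := by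
  have hdisj : Disjoint {e₀ | ∀ᶠ e in 𝓝 e₀, Tendsto (fun x ↦ g (e, x)) l atTop}
      {e₀ | ∀ᶠ e in 𝓝 e₀, Tendsto (fun x ↦ g (e, x)) l atBot} := by
    refine disjoint_left.2 fun e htop hbot ↦ ?_
    have : Nonempty Y := l.nonempty_of_neBot.map fun x ↦ g (e, x)
    exact htop.self_of_nhds.not_tendsto disjoint_atTop_atBot hbot.self_of_nhds
  refine (isPreconnected_univ.subset_or_subset isOpen_setOfPred_eventually_nhds
    isOpen_setOfPred_eventually_nhds hdisj fun e _ ↦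
      eventually_tendsto_atTop_or_eventually_tendsto_atBot hl hs hg hlim e).imp ?_ ?_ <;>
  exact fun h e ↦ (h (mem_univ e)).self_of_nhds

end EventualSign

theorem stmt6_general {E X Y : Type*} [TopologicalSpace E] [PreconnectedSpace E]
    [ConditionallyCompleteLinearOrder X] [TopologicalSpace X] [OrderTopology X] [DenselyOrdered X]
    [NoMinOrder X] [NoMaxOrder X]
    [LinearOrder Y] [TopologicalSpace Y] [OrderClosedTopology Y] [CompactIccSpace Y]
    [NoMinOrder Y] [NoMaxOrder Y]
    {g : E × X → Y} (hG : IsProperMap fun p : E × X ↦ (p.1, g p)) :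
    ((∀ e, Tendsto (fun t ↦ g (e, t)) atTop atTop) ∨
      (∀ e, Tendsto (fun t ↦ g (e, t)) atTop atBot)) ∧
    ((∀ e, Tendsto (fun t ↦ g (e, t)) atBot atTop) ∨
      (∀ e, Tendsto (fun t ↦ g (e, t)) atBot atBot)) := by
  have := weaklyLocallyCompactSpace_of_compactIccSpace (X := X)
  have hg : Continuous g := continuous_snd.comp hG.continuous
  have hlim {l : Filter X} (hl : l ≤ cocompact X) (e : E) :
      Tendsto g (𝓝 e ×ˢ l) (atBot ⊔ atTop) :=
    ((tendsto_nhds_prod_cocompact_of_isProperMap hG e).mono_left (prod_mono_right _ hl)).mono_right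
      cocompact_le_atBot_atTop
  exact ⟨forall_tendsto_atTop_or_forall_tendsto_atBot atTop_basis (fun _ _ ↦ isPreconnected_Ici) hg
      (hlim atTop_le_cocompact),
    forall_tendsto_atTop_or_forall_tendsto_atBot atBot_basis (fun _ _ ↦ isPreconnected_Iic) hg
      (hlim atBot_le_cocompact)⟩

/-- If `G (e,t) = (e, g (e,t))` is a proper fiber-preserving continuous map on `E × ℝ`
with `E` a connected metric space, then the limits of `g (e, t)` as `t → +∞` and as
`t → -∞` are `+∞` or `-∞`, with signs independent of `e`. -/
theorem stmt6 {E : Type*} [MetricSpace E] [ConnectedSpace E]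
    (g : E × ℝ → ℝ) (hg : Continuous g)
    (G : E × ℝ → E × ℝ) (hG : ∀ p : E × ℝ, G p = (p.1, g p))
    (hproper : ∀ K : Set (E × ℝ), IsCompact K → IsCompact (G ⁻¹' K)) :
    ((∀ e : E, Filter.Tendsto (fun t => g (e, t)) Filter.atTop Filter.atTop) ∨
     (∀ e : E, Filter.Tendsto (fun t => g (e, t)) Filter.atTop Filter.atBot)) ∧
    ((∀ e : E, Filter.Tendsto (fun t => g (e, t)) Filter.atBot Filter.atTop) ∨
     (∀ e : E, Filter.Tendsto (fun t => g (e, t)) Filter.atBot Filter.atBot)) := by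
  have hGc : Continuous G := by rw [funext hG]; fun_prop
  have hGp : IsProperMap G := isProperMap_iff_isCompact_preimage.2 ⟨hGc, fun K ↦ hproper K⟩
  exact stmt6_general (funext hG ▸ hGp)
end

section
/- Let E be a real Banach space and let g : E × ℝ → ℝ be continuous such that the map G : E × ℝ → E × ℝ defined by G(e,t) = (e, g(e,t)) is proper. Assume the heights are normalized: for every e ∈ E, g(e,0) = 0, the function t ↦ g(e,t) is strictly increasing on (−∞, 0] and strictly decreasing on [0, ∞). Then the restriction of G to E × [0, ∞) is a homeomorphism onto E × (−∞, 0], and the restriction of G to E × (−∞, 0] is a homeomorphism onto E × (−∞, 0]. -/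
/-!
Over each `e`, properness forces `t ↦ g (e, t)` to leave every compact set along either half-line;
being bounded above by its value `0` at the peak, it tends to `-∞` there, so the intermediate value
theorem and strict monotonicity make it a bijection from the half-line onto `(-∞, 0]`.
Hence `G` is a bijection between the closed half-spaces, and since a proper map is closed, the
inverse is continuous.
-/

open Filter Set Topology

section FiberPreserving

variable {E X Y : Type*}

theorem bijOn_fiberPreserving {g : E × X → Y} {s : Set X} {t : Set Y}
    (h : ∀ e, BijOn (fun x ↦ g (e, x)) s t) :
    BijOn (fun p : E × X ↦ (p.1, g p)) (Prod.snd ⁻¹' s) (Prod.snd ⁻¹' t) := by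
  refine ⟨fun p hp ↦ (h p.1).mapsTo hp, ?_, ?_⟩
  · rintro ⟨e, x⟩ hx ⟨e', x'⟩ hx' heq
    obtain ⟨rfl, hgx⟩ := Prod.mk.inj heq
    exact Prod.ext rfl ((h e).injOn hx hx' hgx)
  · rintro ⟨e, y⟩ hy
    obtain ⟨x, hx, rfl⟩ := (h e).surjOn hy
    exact ⟨(e, x), hx, rfl⟩

variable [TopologicalSpace E] [TopologicalSpace X] [TopologicalSpace Y]

theorem isProperMap_fiber {g : E × X → Y} (hG : IsProperMap fun p : E × X ↦ (p.1, g p)) (e : E) :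
    IsProperMap fun x ↦ g (e, x) := by
  refine isProperMap_iff_ultrafilter.2
    ⟨(continuous_snd.comp hG.continuous).comp (.prodMk_right e), fun U y hy ↦ ?_⟩
  have hlim : Tendsto (fun p : E × X ↦ (p.1, g p)) (U.map (Prod.mk e)) (𝓝 (e, y)) :=
    tendsto_map'_iff.2 (tendsto_const_nhds.prodMk_nhds hy)
  obtain ⟨⟨e', x⟩, heq, hle⟩ := hG.ultrafilter_le_nhds_of_tendsto hlim
  obtain ⟨rfl, hgx⟩ := Prod.mk.inj heq
  have hx : Tendsto (Prod.mk e') U (𝓝 (e', x)) := hle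
  exact ⟨x, hgx, (continuous_snd.tendsto _).comp hx⟩

end FiberPreserving

section ProperMap

variable {X Y : Type*} [TopologicalSpace X] [TopologicalSpace Y] {s : Set X}

theorem exists_homeomorph_of_bijOn_of_isClosedMap {f : X → Y} {t : Set Y} (hf : Continuous f)
    (hf_closed : IsClosedMap f) (hs : IsClosed s) (h : BijOn f s t) :
    ∃ H : s ≃ₜ t, ∀ x, (H x : Y) = f x := by
  have hemb : IsClosedEmbedding (s.domRestrict f) :=
    .of_continuous_injective_isClosedMap (hf.comp continuous_subtype_val) h.injOn.injective
      (hf_closed.comp hs.isClosedMap_subtype_val)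
  have hrange : range (s.domRestrict f) = t := (range_domRestrict f s).trans h.image_eq
  exact ⟨hemb.toHomeomorph.trans (.setCongr hrange), fun _ ↦ rfl⟩

theorem neBot_cocompact_inf_principal (hs : IsClosed s) (hs_noncompact : ¬IsCompact s) :
    (cocompact X ⊓ 𝓟 s).NeBot := by
  refine ⟨fun hbot ↦ hs_noncompact ?_⟩
  obtain ⟨K, hsK, hK⟩ := (disjoint_cocompact_left _).1 (disjoint_iff.2 hbot)
  exact hK.of_isClosed_subset hs hsK

variable [LinearOrder Y] [CompactIccSpace Y]

theorem tendsto_atBot_of_isProperMap_of_mapsTo_Iic {f : X → Y} {b : Y}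
    (hf : IsProperMap f) (hb : MapsTo f s (Iic b)) :
    Tendsto f (cocompact X ⊓ 𝓟 s) atBot := by
  refine tendsto_atBot.2 fun y ↦ mem_inf_principal.2 ?_
  filter_upwards [(hf.isCompact_preimage isCompact_Icc).compl_mem_cocompact] with x hx hxs
  exact le_of_not_ge fun hyx ↦ hx ⟨hyx, hb hxs⟩

variable [OrderClosedTopology Y]

theorem surjOn_Iic_of_isProperMap_of_mapsTo_Iic {f : X → Y} {a : X} {b : Y} (hf : IsProperMap f)
    (hs : IsClosed s) (hs_conn : IsPreconnected s) (hs_noncompact : ¬IsCompact s) (ha : a ∈ s)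
    (hb : MapsTo f s (Iic b)) : SurjOn f s (Iic (f a)) :=
  have := neBot_cocompact_inf_principal hs hs_noncompact
  hs_conn.intermediate_value_Iic ha inf_le_right hf.continuous.continuousOn
    (tendsto_atBot_of_isProperMap_of_mapsTo_Iic hf hb)

theorem exists_homeomorph_of_isProperMap_fiberPreserving {E : Type*} [TopologicalSpace E]
    {g : E × X → Y} {a : X} {c : Y} (hG : IsProperMap fun p : E × X ↦ (p.1, g p))
    (hs : IsClosed s) (hs_conn : IsPreconnected s) (hs_noncompact : ¬IsCompact s) (ha : a ∈ s)
    (hc : ∀ e, g (e, a) = c) (hle : ∀ e, MapsTo (fun x ↦ g (e, x)) s (Iic c))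
    (hinj : ∀ e, InjOn (fun x ↦ g (e, x)) s) :
    ∃ H : (Prod.snd ⁻¹' s : Set (E × X)) ≃ₜ (Prod.snd ⁻¹' Iic c : Set (E × Y)),
      ∀ p, (H p : E × Y) = (p.1.1, g p) := by
  have hsurj (e : E) : SurjOn (fun x ↦ g (e, x)) s (Iic c) :=
    hc e ▸ surjOn_Iic_of_isProperMap_of_mapsTo_Iic (isProperMap_fiber hG e) hs hs_conn
      hs_noncompact ha (hle e)
  exact exists_homeomorph_of_bijOn_of_isClosedMap hG.continuous hG.isClosedMap
    (hs.preimage continuous_snd) (bijOn_fiberPreserving fun e ↦ ⟨hle e, hinj e, hsurj e⟩)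

end ProperMap

theorem stmt9_general {E : Type*} [TopologicalSpace E] (g : E × ℝ → ℝ)
    (hG : IsProperMap fun p : E × ℝ ↦ (p.1, g p)) (h0 : ∀ e, g (e, 0) = 0)
    (hmono : ∀ e, StrictMonoOn (fun t ↦ g (e, t)) (Iic 0))
    (hanti : ∀ e, StrictAntiOn (fun t ↦ g (e, t)) (Ici 0)) :
    (∃ H : {p : E × ℝ // 0 ≤ p.2} ≃ₜ {p : E × ℝ // p.2 ≤ 0},
        ∀ x, (H x : E × ℝ) = (x.1.1, g x)) ∧
    (∃ H : {p : E × ℝ // p.2 ≤ 0} ≃ₜ {p : E × ℝ // p.2 ≤ 0},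
        ∀ x, (H x : E × ℝ) = (x.1.1, g x)) := by
  have hle_right (e : E) : MapsTo (fun t ↦ g (e, t)) (Ici 0) (Iic 0) := fun _ ht ↦
    ((hanti e).antitoneOn self_mem_Ici ht ht).trans_eq (h0 e)
  have hle_left (e : E) : MapsTo (fun t ↦ g (e, t)) (Iic 0) (Iic 0) := fun _ ht ↦
    ((hmono e).monotoneOn ht self_mem_Iic ht).trans_eq (h0 e)
  constructor
  · exact exists_homeomorph_of_isProperMap_fiberPreserving hG isClosed_Ici isPreconnected_Ici
      (fun h ↦ not_bddAbove_Ici 0 h.bddAbove) self_mem_Ici h0 hle_right fun e ↦ (hanti e).injOn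
  · exact exists_homeomorph_of_isProperMap_fiberPreserving hG isClosed_Iic isPreconnected_Iic
      (fun h ↦ not_bddBelow_Iic 0 h.bddBelow) self_mem_Iic h0 hle_left fun e ↦ (hmono e).injOn

/-- Let `G (e,t) = (e, g (e,t))` be a proper fiber-preserving continuous map on `E × ℝ`
(`E` a real Banach space) with normalized heights: `g (e, 0) = 0`, `t ↦ g (e, t)` strictly
increasing on `(-∞, 0]` and strictly decreasing on `[0, ∞)`. Then the restriction of `G`
to `E × [0, ∞)` is a homeomorphism onto `E × (-∞, 0]`, and the restriction of `G` to
`E × (-∞, 0]` is a homeomorphism onto `E × (-∞, 0]`. -/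
theorem stmt9 {E : Type*} [NormedAddCommGroup E] [NormedSpace ℝ E] [CompleteSpace E]
    (g : E × ℝ → ℝ) (hg : Continuous g)
    (G : E × ℝ → E × ℝ) (hG : ∀ p : E × ℝ, G p = (p.1, g p))
    (hproper : ∀ K : Set (E × ℝ), IsCompact K → IsCompact (G ⁻¹' K))
    (h0 : ∀ e : E, g (e, 0) = 0)
    (hmono : ∀ e : E, StrictMonoOn (fun t => g (e, t)) (Set.Iic (0 : ℝ)))
    (hanti : ∀ e : E, StrictAntiOn (fun t => g (e, t)) (Set.Ici (0 : ℝ))) :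
    (∃ H : {p : E × ℝ // 0 ≤ p.2} ≃ₜ {p : E × ℝ // p.2 ≤ 0},
        ∀ x : {p : E × ℝ // 0 ≤ p.2}, (H x : E × ℝ) = G x.val) ∧
    (∃ H : {p : E × ℝ // p.2 ≤ 0} ≃ₜ {p : E × ℝ // p.2 ≤ 0},
        ∀ x : {p : E × ℝ // p.2 ≤ 0}, (H x : E × ℝ) = G x.val) := by
  obtain rfl : G = fun p ↦ (p.1, g p) := funext hG
  exact stmt9_general g (isProperMap_iff_isCompact_preimage.2 ⟨by fun_prop, fun K ↦ hproper K⟩)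
    h0 hmono hanti
end

section
/- Let E be a real Banach space and let g : E × ℝ → ℝ be continuous such that the map G : E × ℝ → E × ℝ defined by G(e,t) = (e, g(e,t)) is proper, and assume for every e ∈ E that g(e,0) = 0, t ↦ g(e,t) is strictly increasing on (−∞, 0] and strictly decreasing on [0, ∞). Define j : E × ℝ → E × ℝ by j(e,t) = (e, g(e,t)) for t ≤ 0 and j(e,t) = (e, −g(e,t)) for t ≥ 0. Then j is a homeomorphism of E × ℝ onto E × ℝ, and (G ∘ j⁻¹)(e,t) = (e, −|t|) for all (e,t) ∈ E × ℝ. -/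
/-!
Flipping the sign of `g` over the positive half-line turns each fibre map `g (e, ·)` into a strictly
increasing function; it is surjective because properness forces `g (e, t) → -∞` as `|t| → ∞`.
A family of increasing bijections `φ e` with `e ↦ φ e a` continuous for every `a` assembles to a
homeomorphism, since `a < (φ e)⁻¹ y ↔ φ e a < y` is an open condition on `(e, y)`.
-/

open Filter Set

section FiberwiseOrderIso

variable {E α β : Type*} [TopologicalSpace E]
  [LinearOrder α] [TopologicalSpace α] [OrderTopology α]
  [LinearOrder β] [TopologicalSpace β]

theorem continuous_fiberwise_orderIso_symm [OrderClosedTopology β] {φ : E → α ≃o β}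
    (hφ : ∀ a, Continuous fun e => φ e a) : Continuous fun p : E × β => (φ p.1).symm p.2 := by
  have hφ_fst (a : α) : Continuous fun p : E × β => φ p.1 a := (hφ a).comp continuous_fst
  refine OrderTopology.continuous_iff.2 fun a => ⟨?_, ?_⟩
  · simpa only [preimage, mem_Ioi, OrderIso.lt_symm_apply] using
      isOpen_lt (hφ_fst a) continuous_snd
  · simpa only [preimage, mem_Iio, OrderIso.symm_apply_lt] using
      isOpen_lt continuous_snd (hφ_fst a)

variable [OrderTopology β]

theorem continuous_fiberwise_orderIso {φ : E → α ≃o β} (hφ : ∀ a, Continuous fun e => φ e a) :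
    Continuous fun p : E × α => φ p.1 p.2 :=
  continuous_fiberwise_orderIso_symm (φ := fun e => (φ e).symm) fun b =>
    (continuous_fiberwise_orderIso_symm hφ).comp (.prodMk_left b)

/-- The fibre-preserving homeomorphism `(e, a) ↦ (e, φ e a)` given by a family of order
isomorphisms. Monotonicity upgrades continuity in the base variable to joint continuity. -/
def fiberwiseHomeomorph (φ : E → α ≃o β) (hφ : ∀ a, Continuous fun e => φ e a) :
    E × α ≃ₜ E × β where
  toEquiv := (Equiv.refl E).prodShear fun e => (φ e).toEquiv
  continuous_toFun := continuous_fst.prodMk (continuous_fiberwise_orderIso hφ)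
  continuous_invFun := continuous_fst.prodMk (continuous_fiberwise_orderIso_symm hφ)

theorem fiberwiseHomeomorph_apply (φ : E → α ≃o β) (hφ : ∀ a, Continuous fun e => φ e a)
    (p : E × α) : fiberwiseHomeomorph φ hφ p = (p.1, φ p.1 p.2) :=
  rfl

end FiberwiseOrderIso

theorem tendsto_cocompact_fiber {E α β : Type*} [TopologicalSpace E] [TopologicalSpace α]
    [TopologicalSpace β] {g : E × α → β}
    (hproper : ∀ K : Set (E × β), IsCompact K → IsCompact ((fun p => (p.1, g p)) ⁻¹' K)) (e : E) :
    Tendsto (fun a => g (e, a)) (cocompact α) (cocompact β) := by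
  refine hasBasis_cocompact.tendsto_right_iff.2 fun K hK => ?_
  have hfiber := (hproper _ (isCompact_singleton (x := e) |>.prod hK)).image continuous_snd
  filter_upwards [hfiber.compl_mem_cocompact] with a ha haK
  exact ha ⟨(e, a), ⟨rfl, haK⟩, rfl⟩

theorem tendsto_atBot_of_tendsto_cocompact {ι β : Type*} [LinearOrder β] [TopologicalSpace β]
    [CompactIccSpace β] {l : Filter ι} {f : ι → β} {c : β} (hf : Tendsto f l (cocompact β))
    (hc : ∀ᶠ x in l, f x ≤ c) : Tendsto f l atBot := by
  refine tendsto_atBot.2 fun b => ?_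
  filter_upwards [hf.eventually (isCompact_Icc (a := b) (b := c)).compl_mem_cocompact, hc]
    with x hx hxc
  exact (not_le.1 fun hbx => hx ⟨hbx, hxc⟩).le

/-- The function `f` with its sign reversed on the positive half-line. A function rising up to the
value `0` at `0` and falling afterwards is thereby unfolded to an increasing one. -/
def flipPos {α β : Type*} [LinearOrder α] [Zero α] [Neg β] (f : α → β) (a : α) : β :=
  if a ≤ 0 then f a else -f a

section FlipPos

variable {α β : Type*} [LinearOrder α] [Zero α] [NegZeroClass β] {f : α → β} {a : α}

theorem flipPos_of_nonpos (ha : a ≤ 0) : flipPos f a = f a :=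
  if_pos ha

theorem flipPos_of_nonneg (h0 : f 0 = 0) (ha : 0 ≤ a) : flipPos f a = -f a := by
  obtain rfl | ha := ha.eq_or_lt
  · rw [flipPos_of_nonpos le_rfl, h0, neg_zero]
  · exact if_neg ha.not_ge

theorem continuous_flipPos [TopologicalSpace α] [OrderClosedTopology α] [TopologicalSpace β]
    [ContinuousNeg β] (hf : Continuous f) (h0 : f 0 = 0) : Continuous (flipPos f) := by
  refine hf.if_le hf.neg continuous_id continuous_const fun a ha => ?_
  rw [show a = 0 from ha, h0, neg_zero]

theorem continuous_flipPos_apply {E : Type*} [TopologicalSpace E] [TopologicalSpace β]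
    [ContinuousNeg β] {F : E → α → β} (hF : Continuous fun e => F e a) :
    Continuous fun e => flipPos (F e) a := by
  unfold flipPos
  split_ifs
  exacts [hF, hF.neg]

end FlipPos

section FlipPosOrdered

variable {α β : Type*} [LinearOrder α] [Zero α] [AddCommGroup β] [LinearOrder β]
  [IsOrderedAddMonoid β] {f : α → β}

theorem neg_abs_flipPos {a : α} (hf : f a ≤ 0) : -|flipPos f a| = f a := by
  unfold flipPos
  split_ifs <;> simp only [abs_neg, abs_of_nonpos hf, neg_neg]

theorem strictMono_flipPos (h0 : f 0 = 0) (hmono : StrictMonoOn f (Iic 0))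
    (hanti : StrictAntiOn f (Ici 0)) : StrictMono (flipPos f) :=
  StrictMonoOn.Iic_union_Ici
    (hmono.congr fun _ ha => (flipPos_of_nonpos ha).symm)
    (hanti.neg.congr fun _ ha => (flipPos_of_nonneg h0 ha).symm)

end FlipPosOrdered

theorem surjective_flipPos {α β : Type*} [ConditionallyCompleteLinearOrder α] [DenselyOrdered α]
    [NoMinOrder α] [NoMaxOrder α] [Zero α] [TopologicalSpace α] [OrderTopology α]
    [AddCommGroup β] [LinearOrder β] [IsOrderedAddMonoid β] [TopologicalSpace β]
    [OrderClosedTopology β] [ContinuousNeg β] {f : α → β} (hf : Continuous f) (h0 : f 0 = 0)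
    (hlim : Tendsto f (cocompact α) atBot) : Function.Surjective (flipPos f) := by
  have htop : Tendsto (flipPos f) atTop atTop := by
    refine (tendsto_neg_atBot_atTop.comp (hlim.mono_left atTop_le_cocompact)).congr' ?_
    filter_upwards [eventually_ge_atTop 0] with a ha using (flipPos_of_nonneg h0 ha).symm
  have hbot : Tendsto (flipPos f) atBot atBot := by
    refine (hlim.mono_left atBot_le_cocompact).congr' ?_
    filter_upwards [eventually_le_atBot 0] with a ha using (flipPos_of_nonpos ha).symm
  exact (continuous_flipPos hf h0).surjective htop hbot

theorem stmt10_general {E : Type*} [TopologicalSpace E] (g : E × ℝ → ℝ)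
    (hg_base : ∀ t, Continuous fun e => g (e, t)) (hg_fiber : ∀ e, Continuous fun t => g (e, t))
    (hproper : ∀ e, Tendsto (fun t => g (e, t)) (cocompact ℝ) (cocompact ℝ))
    (G : E × ℝ → E × ℝ) (hG : ∀ p, G p = (p.1, g p))
    (h0 : ∀ e, g (e, 0) = 0)
    (hmono : ∀ e, StrictMonoOn (fun t => g (e, t)) (Iic 0))
    (hanti : ∀ e, StrictAntiOn (fun t => g (e, t)) (Ici 0))
    (j : E × ℝ → E × ℝ)
    (hj_neg : ∀ e t, t ≤ 0 → j (e, t) = (e, g (e, t)))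
    (hj_pos : ∀ e t, 0 ≤ t → j (e, t) = (e, -g (e, t))) :
    ∃ J : (E × ℝ) ≃ₜ (E × ℝ), (∀ p, J p = j p) ∧ ∀ e t, G (J.symm (e, t)) = (e, -|t|) := by
  have hnonpos (e : E) (t : ℝ) : g (e, t) ≤ 0 := h0 e ▸
    isMaxOn_univ_of_mono_anti (hmono e).monotoneOn (hanti e).antitoneOn (mem_univ t)
  have hlim (e : E) : Tendsto (fun t => g (e, t)) (cocompact ℝ) atBot :=
    tendsto_atBot_of_tendsto_cocompact (hproper e) (.of_forall (hnonpos e))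
  let φ (e : E) : ℝ ≃o ℝ := (strictMono_flipPos (h0 e) (hmono e) (hanti e)).orderIsoOfSurjective _
    (surjective_flipPos (hg_fiber e) (h0 e) (hlim e))
  let J := fiberwiseHomeomorph φ fun t =>
    continuous_flipPos_apply (F := fun e s => g (e, s)) (hg_base t)
  have hJ (e : E) (t : ℝ) : J (e, t) = (e, flipPos (fun s => g (e, s)) t) :=
    fiberwiseHomeomorph_apply φ _ (e, t)
  have hGJ (p : E × ℝ) : G p = ((J p).1, -|(J p).2|) := by
    rw [hJ p.1 p.2, neg_abs_flipPos (f := fun s => g (p.1, s)) (hnonpos p.1 p.2), hG]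
  refine ⟨J, fun ⟨e, t⟩ => ?_, fun e t => by rw [hGJ, J.apply_symm_apply]⟩
  obtain ht | ht := le_total t 0
  · rw [hJ, flipPos_of_nonpos ht, hj_neg e t ht]
  · rw [hJ, flipPos_of_nonneg (h0 e) ht, hj_pos e t ht]

/-- Let `G (e,t) = (e, g (e,t))` be a proper fiber-preserving continuous map on `E × ℝ`
(`E` a real Banach space) with normalized heights (`g (e, 0) = 0`, strictly increasing on
`(-∞, 0]`, strictly decreasing on `[0, ∞)`). Define `j (e,t) = (e, g (e,t))` for `t ≤ 0`
and `j (e,t) = (e, -g (e,t))` for `t ≥ 0`. Then `j` is a homeomorphism of `E × ℝ` onto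
`E × ℝ` and `(G ∘ j⁻¹) (e, t) = (e, -|t|)`. -/
theorem stmt10 {E : Type*} [NormedAddCommGroup E] [NormedSpace ℝ E] [CompleteSpace E]
    (g : E × ℝ → ℝ) (hg : Continuous g)
    (G : E × ℝ → E × ℝ) (hG : ∀ p : E × ℝ, G p = (p.1, g p))
    (hproper : ∀ K : Set (E × ℝ), IsCompact K → IsCompact (G ⁻¹' K))
    (h0 : ∀ e : E, g (e, 0) = 0)
    (hmono : ∀ e : E, StrictMonoOn (fun t => g (e, t)) (Set.Iic (0 : ℝ)))
    (hanti : ∀ e : E, StrictAntiOn (fun t => g (e, t)) (Set.Ici (0 : ℝ)))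
    (j : E × ℝ → E × ℝ)
    (hj_neg : ∀ (e : E) (t : ℝ), t ≤ 0 → j (e, t) = (e, g (e, t)))
    (hj_pos : ∀ (e : E) (t : ℝ), 0 ≤ t → j (e, t) = (e, -g (e, t))) :
    ∃ J : (E × ℝ) ≃ₜ (E × ℝ), (∀ p : E × ℝ, J p = j p) ∧
      ∀ (e : E) (t : ℝ), G (J.symm (e, t)) = (e, -|t|) := by
  obtain rfl : G = fun p => (p.1, g p) := funext hG
  exact stmt10_general g (fun _ => by fun_prop) (fun _ => by fun_prop)
    (tendsto_cocompact_fiber hproper) _ hG h0 hmono hanti j hj_neg hj_pos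
end
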